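/- Let E₂(q) = 1 − 24 Σ_{n=1}^∞ σ₁(n) qⁿ, and for |x| < 1 define D_{yz}(x) = Σ_{r≥1, s≥1} [ −(4r+4s−2) x^{32(2r−1)s} + (2r+2s) x^{64rs} ]. Then for every complex number x with |x| < 1, D_{yz}(x) = ( 1 + E₂(x^{32}) − 2 E₂(x^{64}) ) / 4. -/

import Mathlib

open scoped BigOperators

/-- The weight-2 Eisenstein series `E₂(q) = 1 − 24 Σ_{n=1}^∞ σ₁(n) qⁿ`. -/
noncomputable def E2 (q : ℂ) : ℂ :=
  1 - 24 * ∑' n : ℕ, (ArithmeticFunction.sigma 1 (n + 1) : ℂ) * q ^ (n + 1)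

/-- `D_{yz}(x) = Σ_{r,s≥1} [−(4r+4s−2) x^{32(2r−1)s} + (2r+2s) x^{64rs}]`,
which is `x⁴·d_{yz}(x)` for the coefficient `d_{yz}` of `y²z²` in the open
Gromov–Witten potential of `ℙ¹_{2,4,4}` (indexed by `r = k+1`, `s = l+1`). -/
noncomputable def Dyz (x : ℂ) : ℂ :=
  ∑' p : ℕ × ℕ,
    (-(4 * ((p.1 : ℂ) + 1) + 4 * ((p.2 : ℂ) + 1) - 2)
        * x ^ (32 * (2 * (p.1 + 1) - 1) * (p.2 + 1))
      + (2 * ((p.1 : ℂ) + 1) + 2 * ((p.2 : ℂ) + 1)) * x ^ (64 * (p.1 + 1) * (p.2 + 1)))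

noncomputable def Ssum (q : ℂ) : ℂ :=
  ∑' n : ℕ, (ArithmeticFunction.sigma 1 (n + 1) : ℂ) * q ^ (n + 1)

lemma hasSum_snd (q : ℂ) (hq : ‖q‖ < 1) :
    HasSum (fun p : ℕ × ℕ => ((p.2 : ℂ) + 1) * q ^ ((p.1 + 1) * (p.2 + 1))) (Ssum q) := by
  have hs := summable_prod_mul_pow 1 hq
  have ht := tsum_prod_pow_eq_tsum_sigma 1 hq
  rw [← hs.tsum_prod] at ht
  have h1 := hs.hasSum
  rw [ht, tsum_pnat_eq_tsum_succ
    (f := fun e : ℕ => (ArithmeticFunction.sigma 1 e : ℂ) * q ^ e)] at h1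
  have h2 := (Equiv.hasSum_iff
    (Equiv.prodCongr Equiv.pnatEquivNat.symm Equiv.pnatEquivNat.symm)).mpr h1
  refine (congrArg (fun f => HasSum f (Ssum q)) (funext fun p => ?_)).mpr h2
  simp [Equiv.pnatEquivNat]

lemma hasSum_fst (q : ℂ) (hq : ‖q‖ < 1) :
    HasSum (fun p : ℕ × ℕ => ((p.1 : ℂ) + 1) * q ^ ((p.1 + 1) * (p.2 + 1))) (Ssum q) := by
  have h := (Equiv.hasSum_iff (Equiv.prodComm ℕ ℕ)).mpr (hasSum_snd q hq)
  refine (congrArg (fun f => HasSum f (Ssum q)) (funext fun p => ?_)).mpr h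
  simp [mul_comm (p.1 + 1)]

theorem Dyz_eq_eisenstein (x : ℂ) (hx : ‖x‖ < 1) :
    Dyz x = (1 + E2 (x ^ 32) - 2 * E2 (x ^ 64)) / 4 := by
  have hq : ‖x ^ 32‖ < 1 := by
    rw [norm_pow]; exact pow_lt_one₀ (norm_nonneg _) hx (by norm_num)
  have hq2 : ‖x ^ 64‖ < 1 := by
    rw [norm_pow]; exact pow_lt_one₀ (norm_nonneg _) hx (by norm_num)
  have hE : ∀ q, E2 q = 1 - 24 * Ssum q := fun q => rfl
  have hA := ((hasSum_fst _ hq).mul_left 2).add ((hasSum_snd _ hq).mul_left 4)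
  have hB := ((hasSum_fst _ hq2).mul_left 2).add ((hasSum_snd _ hq2).mul_left 2)
  let e : (ℕ × ℕ) ⊕ (ℕ × ℕ) ≃ ℕ × ℕ :=
    (Equiv.sumProdDistrib ℕ ℕ ℕ).symm.trans
      (Equiv.prodCongr Equiv.natSumNatEquivNat (Equiv.refl ℕ))
  have hA' := (Equiv.hasSum_iff e).mpr hA
  have hl := (hA'.summable.comp_injective Sum.inl_injective).hasSum
  have hr : HasSum _ (2 * (2 * Ssum (x ^ 64) + 2 * Ssum (x ^ 64))) := hB.mul_left 2
  have hsum := hA'.unique (HasSum.sum hl (b := 2 * (2 * Ssum (x ^ 64) + 2 * Ssum (x ^ 64))) (by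
    refine (congrArg (fun f => HasSum f _) (funext fun p => ?_)).mpr hr
    simp [e]
    ring))
  have hD := (hl.neg.add hB).tsum_eq
  have this := Eq.trans (a := Dyz x) (by
    unfold Dyz
    refine tsum_congr fun p => ?_
    have h1 : 2 * (p.1 + 1) - 1 = 2 * p.1 + 1 := by omega
    rw [h1]
    simp [e]
    ring) hD
  rw [this, hE, hE]
  linear_combination hsum
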